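/- Let (X, T) be a dynamical system. If the induced hyperspace system (K(X), T_K) is equicontinuous, then the Zadeh extension system (𝔽₀(X), T_F) with the levelwise metric d_∞ is equicontinuous. -/

import Mathlib

open Metric Set TopologicalSpace Filter Function
open scoped Classical

variable {X Y : Type*}

/-- Extended Hausdorff metric on subsets of `X`: the usual Hausdorff distance between
two nonempty sets (or two empty sets), and `diam X` when exactly one of them is empty. -/
noncomputable def eHd (X : Type*) [MetricSpace X] (A B : Set X) : ℝ :=
  if (A.Nonempty ∧ B.Nonempty) ∨ (A = ∅ ∧ B = ∅) then Metric.hausdorffDist A B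
  else Metric.diam (Set.univ : Set X)

/-- The `α`-cut of a fuzzy set. -/
def cut (A : X → ℝ) (α : ℝ) : Set X := {x | α ≤ A x}

/-- The levelwise metric `d_∞` on fuzzy sets. -/
noncomputable def dinf [MetricSpace X] (A B : X → ℝ) : ℝ :=
  sSup {r : ℝ | ∃ α ∈ Set.Ioc (0:ℝ) 1, r = eHd X (cut A α) (cut B α)}

/-- A fuzzy set: an upper semicontinuous function into `[0,1]`. -/
def IsFuzzy [TopologicalSpace X] (A : X → ℝ) : Prop :=
  (∀ x, A x ∈ Set.Icc (0:ℝ) 1) ∧ UpperSemicontinuous A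

/-- `𝔽₀(X)`: nonempty (not identically zero) u.s.c. fuzzy sets. -/
def F0 (X : Type*) [TopologicalSpace X] : Set (X → ℝ) :=
  {A | IsFuzzy A ∧ ∃ x, A x ≠ 0}

/-- `𝔽^{=λ}(X)`: u.s.c. fuzzy sets with maximum value `λ`. -/
def Feq (X : Type*) [TopologicalSpace X] (lam : ℝ) : Set (X → ℝ) :=
  {A | IsFuzzy A ∧ (∃ x, A x = lam) ∧ ∀ x, A x ≤ lam}

/-- `𝔽^{≥λ}(X)`: u.s.c. fuzzy sets attaining a value `≥ λ`. -/
def Fge (X : Type*) [TopologicalSpace X] (lam : ℝ) : Set (X → ℝ) :=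
  {A | IsFuzzy A ∧ ∃ x, lam ≤ A x}

/-- Zadeh's extension of `T`. -/
noncomputable def zadeh (T : X → X) (A : X → ℝ) : X → ℝ :=
  fun x => sSup (A '' (T ⁻¹' {x}))

/-- The induced map `T_K` on the hyperspace of nonempty closed (= compact) subsets. -/
def hyper [TopologicalSpace X] (T : X → X) (hT : Continuous T)
    (A : NonemptyCompacts X) : NonemptyCompacts X :=
  ⟨⟨T '' A, A.isCompact.image hT⟩, A.nonempty.image T⟩

/-- Topological transitivity. -/
def TopTrans [TopologicalSpace Y] (S : Y → Y) : Prop :=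
  ∀ U V : Set Y, IsOpen U → IsOpen V → U.Nonempty → V.Nonempty →
    ∃ n : ℕ, (S^[n] '' U ∩ V).Nonempty

/-- Weak mixing: `S × S` is transitive. -/
def TopWeakMix [TopologicalSpace Y] (S : Y → Y) : Prop :=
  TopTrans (fun p : Y × Y => (S p.1, S p.2))

/-- Topological transitivity of `S` restricted to `C`, for the topology induced by the
(pseudo)metric `ρ`, phrased via metric balls. -/
def TransOn (ρ : Y → Y → ℝ) (S : Y → Y) (C : Set Y) : Prop :=
  ∀ A ∈ C, ∀ B ∈ C, ∀ ε > 0, ∃ n : ℕ, ∃ E ∈ C, ρ E A < ε ∧ ρ (S^[n] E) B < ε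

/-- Weak mixing of `S` restricted to `C`, phrased via metric balls. -/
def WeakMixOn (ρ : Y → Y → ℝ) (S : Y → Y) (C : Set Y) : Prop :=
  ∀ A₁ ∈ C, ∀ A₂ ∈ C, ∀ B₁ ∈ C, ∀ B₂ ∈ C, ∀ ε > 0, ∃ n : ℕ,
    ∃ E₁ ∈ C, ∃ E₂ ∈ C, ρ E₁ A₁ < ε ∧ ρ E₂ A₂ < ε ∧
      ρ (S^[n] E₁) B₁ < ε ∧ ρ (S^[n] E₂) B₂ < ε


/-- Equicontinuity of (the iterates of) a self-map of a metric space. -/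
def EquicontM {Z : Type*} [PseudoMetricSpace Z] (S : Z → Z) : Prop :=
  ∀ ε > 0, ∃ δ > 0, ∀ y z : Z, dist y z < δ → ∀ n : ℕ, dist (S^[n] y) (S^[n] z) < ε

/-- Equicontinuity of `S` restricted to `C`, with respect to the metric `ρ`. -/
def EquicontOn (ρ : Y → Y → ℝ) (S : Y → Y) (C : Set Y) : Prop :=
  ∀ ε > 0, ∃ δ > 0, ∀ A ∈ C, ∀ B ∈ C, ρ A B < δ → ∀ n : ℕ, ρ (S^[n] A) (S^[n] B) < ε

lemma zadeh_max {X : Type*} [MetricSpace X] [CompactSpace X]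
    (T : X → X) (hT : Continuous T) (hTs : Function.Surjective T) {A : X → ℝ}
    (hA : UpperSemicontinuous A) (x : X) :
    ∃ y, T y = x ∧ zadeh T A x = A y ∧ ∀ z, T z = x → A z ≤ A y := by
  have hc : IsCompact (T ⁻¹' {x}) := (isClosed_singleton.preimage hT).isCompact
  obtain ⟨w, hw⟩ := hTs x
  obtain ⟨y, hy, hm⟩ := (hA.upperSemicontinuousOn _).exists_isMaxOn ⟨w, hw⟩ hc
  have hm' : ∀ z, T z = x → A z ≤ A y := fun z hz => hm hz
  refine ⟨y, hy, ?_, hm'⟩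
  have : IsGreatest (A '' (T ⁻¹' {x})) (A y) :=
    ⟨⟨y, hy, rfl⟩, by rintro _ ⟨z, hz, rfl⟩; exact hm' z hz⟩
  exact this.csSup_eq

lemma cut_zadeh {X : Type*} [MetricSpace X] [CompactSpace X]
    (T : X → X) (hT : Continuous T) (hTs : Function.Surjective T) {A : X → ℝ}
    (hA : UpperSemicontinuous A) (α : ℝ) : cut (zadeh T A) α = T '' cut A α := by
  ext x
  obtain ⟨y, hy, he, hm⟩ := zadeh_max T hT hTs hA x
  simp only [cut, mem_ofPred_eq, mem_image, he]
  exact ⟨fun h => ⟨y, h, hy⟩, fun ⟨z, hz, hzx⟩ => hz.trans (hm z hzx)⟩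

lemma cut_closed {X : Type*} [MetricSpace X] {A : X → ℝ}
    (hA : UpperSemicontinuous A) (α : ℝ) : IsClosed (cut A α) :=
  (upperSemicontinuous_iff_isClosed_preimage.1 hA) α

lemma zadeh_usc {X : Type*} [MetricSpace X] [CompactSpace X]
    (T : X → X) (hT : Continuous T) (hTs : Function.Surjective T) {A : X → ℝ}
    (hA : UpperSemicontinuous A) : UpperSemicontinuous (zadeh T A) := by
  refine upperSemicontinuous_iff_isClosed_preimage.2 fun α => ?_
  change IsClosed (cut (zadeh T A) α)
  rw [cut_zadeh T hT hTs hA]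
  exact ((cut_closed hA α).isCompact.image hT).isClosed

lemma zadeh_iter {X : Type*} [MetricSpace X] [CompactSpace X]
    (T : X → X) (hT : Continuous T) (hTs : Function.Surjective T) {A : X → ℝ}
    (hA : UpperSemicontinuous A) (n : ℕ) : UpperSemicontinuous ((zadeh T)^[n] A) ∧
      ∀ α, cut ((zadeh T)^[n] A) α = T^[n] '' cut A α := by
  induction n with
  | zero => exact ⟨hA, fun α => by simp⟩
  | succ n ih =>
    rw [Function.iterate_succ_apply']
    refine ⟨zadeh_usc T hT hTs ih.1, fun α => ?_⟩
    rw [cut_zadeh T hT hTs ih.1, ih.2, Function.iterate_succ', image_comp]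

lemma hyper_iter {X : Type*} [TopologicalSpace X] (T : X → X) (hT : Continuous T)
    (A : NonemptyCompacts X) (n : ℕ) :
    (((hyper T hT)^[n] A : NonemptyCompacts X) : Set X) = T^[n] '' (A : Set X) := by
  induction n with
  | zero => simp
  | succ n ih =>
    rw [Function.iterate_succ_apply', Function.iterate_succ', image_comp, ← ih]
    rfl

lemma eHd_le_diam {X : Type*} [MetricSpace X] [CompactSpace X] (A B : Set X) :
    eHd X A B ≤ Metric.diam (Set.univ : Set X) := by
  unfold eHd
  split_ifs with h
  · rcases h with ⟨hA, hB⟩ | ⟨rfl, rfl⟩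
    · have hb : ∀ s : Set X, Bornology.IsBounded s := fun s => isCompact_univ.isBounded.subset (subset_univ s)
      exact (hausdorffDist_le_diam hA (hb A) hB (hb B)).trans
        (Metric.diam_mono (subset_univ _) (hb _))
    · simp [Metric.diam_nonneg]
  · exact le_rfl

lemma eHd_le_dinf {X : Type*} [MetricSpace X] [CompactSpace X] (A B : X → ℝ) {α : ℝ}
    (hα : α ∈ Set.Ioc (0:ℝ) 1) : eHd X (cut A α) (cut B α) ≤ dinf A B := by
  refine le_csSup ⟨Metric.diam (Set.univ : Set X), ?_⟩ ⟨α, hα, rfl⟩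
  rintro _ ⟨β, _, rfl⟩
  exact eHd_le_diam _ _

/-- If `(K(X), T_K)` is equicontinuous, then the Zadeh extension on `𝔽₀(X)` is
equicontinuous. -/
theorem zadeh_equicontinuous_of_hyper_equicontinuous {X : Type*} [MetricSpace X] [CompactSpace X] [Nontrivial X]
    (T : X → X) (hT : Continuous T) (hTs : Function.Surjective T)
    (heq : EquicontM (hyper T hT)) :
    EquicontOn dinf (zadeh T) (F0 X) := by
  intro ε hε
  obtain ⟨δ, hδ, H⟩ := heq (ε / 2) (half_pos hε)
  have hD : 0 < Metric.diam (Set.univ : Set X) :=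
    Metric.diam_pos Set.nontrivial_univ isCompact_univ.isBounded
  refine ⟨min δ (Metric.diam (Set.univ : Set X)), lt_min hδ hD, fun A hA B hB hAB n => ?_⟩
  have hA' := hA.1.2
  have hB' := hB.1.2
  refine lt_of_le_of_lt (Real.sSup_le ?_ (half_pos hε).le) (half_lt_self hε)
  rintro _ ⟨α, hα, rfl⟩
  have h1 := (eHd_le_dinf A B hα).trans_lt hAB
  rw [(zadeh_iter T hT hTs hA' n).2, (zadeh_iter T hT hTs hB' n).2]
  unfold eHd at h1
  split_ifs at h1 with h
  · rcases h with ⟨hAn, hBn⟩ | ⟨hAe, hBe⟩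
    · let K : NonemptyCompacts X := ⟨⟨cut A α, (cut_closed hA' α).isCompact⟩, hAn⟩
      let L : NonemptyCompacts X := ⟨⟨cut B α, (cut_closed hB' α).isCompact⟩, hBn⟩
      have h2 : dist K L < δ := by
        rw [NonemptyCompacts.dist_eq]
        exact h1.trans_le (min_le_left _ _)
      have h3 := H K L h2 n
      rw [NonemptyCompacts.dist_eq, hyper_iter, hyper_iter] at h3
      unfold eHd
      rw [if_pos (Or.inl ⟨hAn.image _, hBn.image _⟩)]
      exact h3.le
    · rw [hAe, hBe]
      simpa [eHd] using (half_pos hε).le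
  · exact absurd (h1.trans_le (min_le_right _ _)) (lt_irrefl _)
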